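/- arXiv:1004.5439 — 2 statements merged into one kernel-verified Lean document; each statement's English description precedes it below -/
import Mathlib

section
/- Let Q(t) ∈ ℤ[t] be monic of degree r with Q mod 2 irreducible over ℤ/2 and odd constant coefficient, and let λ be the multiplicative order of t in (ℤ/2)[t]/(Q). Then t^λ ≡ 1 (mod 4, Q) if and only if Q(−t) satisfies Condition S. -/
open Polynomial

/-- Condition S: `Q(t)² + Q(−t)² ≡ 2·q_r·Q(t²) (mod 8)` where `q_r` is the leading
coefficient of `Q`. -/
def conditionS (Q : Polynomial ℤ) : Prop :=
  (Q ^ 2 + (Q.comp (-X)) ^ 2).map (Int.castRingHom (ZMod 8)) =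
    (C (2 * Q.leadingCoeff) * Q.comp (X ^ 2)).map (Int.castRingHom (ZMod 8))

lemma Polynomial.map_intCast_zmod_eq_zero_iff (n : ℕ) (p : ℤ[X]) :
    p.map (Int.castRingHom (ZMod n)) = 0 ↔ C (n : ℤ) ∣ p := by
  rw [C_dvd_iff_dvd_coeff, Polynomial.ext_iff]
  simp [ZMod.intCast_zmod_eq_zero_iff_dvd]

lemma Polynomial.map_zmod_two_expand (p : ℤ[X]) :
    (expand ℤ 2 p).map (Int.castRingHom (ZMod 2)) = p.map (Int.castRingHom (ZMod 2)) ^ 2 := by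
  rw [map_expand, ZMod.expand_card]

lemma Polynomial.C_dvd_expand_iff {n : ℤ} {p : ℤ[X]} : C n ∣ expand ℤ 2 p ↔ C n ∣ p := by
  refine ⟨fun h => ?_, fun h => ?_⟩
  · rw [C_dvd_iff_dvd_coeff] at h ⊢
    intro i
    simpa [coeff_expand_mul] using h (i * 2)
  · obtain ⟨q, rfl⟩ := h
    exact ⟨expand ℤ 2 q, by simp⟩

lemma Polynomial.C_dvd_comp_neg_X_iff {n : ℤ} {p : ℤ[X]} : C n ∣ p.comp (-X) ↔ C n ∣ p := by
  have key : ∀ q : ℤ[X], C n ∣ q → C n ∣ q.comp (-X) := by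
    rintro _ ⟨q, rfl⟩
    exact ⟨q.comp (-X), by simp⟩
  exact ⟨fun h => by simpa [comp_assoc] using key _ h, key p⟩

/-- The decomposition of a polynomial into its even and odd parts. -/
lemma Polynomial.exists_eq_expand_add_X_mul_expand (p : ℤ[X]) :
    ∃ e o : ℤ[X], p = expand ℤ 2 e + X * expand ℤ 2 o := by
  induction p using Polynomial.induction_on' with
  | add p q hp hq =>
    obtain ⟨e, o, rfl⟩ := hp
    obtain ⟨e', o', rfl⟩ := hq
    exact ⟨e + e', o + o', by simp only [map_add]; ring⟩
  | monomial n a =>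
    obtain ⟨k, rfl | rfl⟩ := n.even_or_odd'
    · exact ⟨monomial k a, 0, by simp [expand_monomial, mul_comm]⟩
    · refine ⟨0, monomial k a, ?_⟩
      simp [expand_monomial, X_mul_monomial, mul_comm]

lemma dvd_map_zmod_two_iff {Q p : ℤ[X]} :
    Q.map (Int.castRingHom (ZMod 2)) ∣ p.map (Int.castRingHom (ZMod 2)) ↔
      ∃ b c : ℤ[X], p = 2 * b + Q * c := by
  constructor
  · rintro ⟨c, hc⟩
    obtain ⟨c, rfl⟩ := map_surjective (Int.castRingHom (ZMod 2)) (ZMod.intCast_surjective) c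
    have h : (p - Q * c).map (Int.castRingHom (ZMod 2)) = 0 := by simp [hc]
    obtain ⟨b, hb⟩ := (map_intCast_zmod_eq_zero_iff 2 _).1 h
    exact ⟨b, c, by rw [sub_eq_iff_eq_add] at hb; simpa using hb⟩
  · rintro ⟨b, c, rfl⟩
    have h : (2 : (ZMod 2)[X]) = 0 := CharTwo.two_eq_zero
    simp [h]

lemma mem_span_four_iff {Q p : ℤ[X]} :
    p ∈ Ideal.span ({C 4, Q} : Set ℤ[X]) ↔ ∃ b c : ℤ[X], p = 4 * b + Q * c := by
  rw [Ideal.mem_span_pair]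
  refine exists_congr fun b => exists_congr fun c => ?_
  rw [show (C 4 : ℤ[X]) = 4 from rfl, eq_comm, mul_comm b, mul_comm c]

lemma two_mul_mem_span_four_iff {Q p : ℤ[X]} (hQ : Q.Monic) :
    2 * p ∈ Ideal.span ({C 4, Q} : Set ℤ[X]) ↔
      Q.map (Int.castRingHom (ZMod 2)) ∣ p.map (Int.castRingHom (ZMod 2)) := by
  rw [mem_span_four_iff, dvd_map_zmod_two_iff]
  constructor
  · rintro ⟨b, c, h⟩
    have h2 : (2 : (ZMod 2)[X]) = 0 := CharTwo.two_eq_zero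
    have h4 : (4 : (ZMod 2)[X]) = 0 := by linear_combination 2 * h2
    have hc : c.map (Int.castRingHom (ZMod 2)) = 0 := by
      have := congrArg (map (Int.castRingHom (ZMod 2))) h
      simp only [Polynomial.map_mul, Polynomial.map_add, Polynomial.map_ofNat, h2, h4, zero_mul,
        zero_add] at this
      exact (mul_eq_zero.1 this.symm).resolve_left (hQ.map _).ne_zero
    obtain ⟨d, rfl⟩ := (map_intCast_zmod_eq_zero_iff 2 _).1 hc
    refine ⟨b, d, mul_left_cancel₀ (two_ne_zero : (2 : ℤ[X]) ≠ 0) ?_⟩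
    rw [h, show (C ((2 : ℕ) : ℤ) : ℤ[X]) = 2 from rfl]
    ring
  · rintro ⟨b, c, rfl⟩
    exact ⟨b, 2 * c, by ring⟩

/-- Condition S for `Q(-t)` says that the polynomial whose roots are the squares of those of `Q`
agrees with `Q` modulo 4. -/
lemma conditionS_comp_neg_X_iff {Q e o : ℤ[X]} (hQ : Q.Monic)
    (h : Q = expand ℤ 2 e + X * expand ℤ 2 o) :
    conditionS (Q.comp (-X)) ↔
      C 4 ∣ C ((-1) ^ Q.natDegree) * (e ^ 2 - X * o ^ 2) - Q := by
  have hneg : Q.comp (-X) = expand ℤ 2 e - X * expand ℤ 2 o := by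
    conv_lhs => rw [h]
    simp [expand_eq_comp_X_pow, comp_assoc, sub_eq_add_neg]
  have hlead : (Q.comp (-X)).leadingCoeff = (-1) ^ Q.natDegree := by
    rw [leadingCoeff_comp (by simp)]
    simp [hQ.leadingCoeff]
  set s : ℤ := (-1) ^ Q.natDegree with hs
  have hss : C s * C s = 1 := by
    rw [← C_mul, hs, ← mul_pow]; simp
  have hsq : ∀ p : ℤ[X], C 4 ∣ p.comp (-X) ^ 2 - p ^ 2 := by
    intro p
    have h2 : C ((2 : ℕ) : ℤ) ∣ p.comp (-X) - p := by
      rw [← map_intCast_zmod_eq_zero_iff]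
      simp [Polynomial.map_comp, CharTwo.neg_eq]
    obtain ⟨d, hd⟩ := h2
    refine ⟨d * (d + p), ?_⟩
    rw [sub_eq_iff_eq_add.1 hd, show (C 4 : ℤ[X]) = 4 from rfl,
      show (C ((2 : ℕ) : ℤ) : ℤ[X]) = 2 from rfl]
    ring
  have hexp : Q.comp (-X) ^ 2 + Q ^ 2 - C (2 * s) * expand ℤ 2 (Q.comp (-X)) =
      2 * expand ℤ 2 (e ^ 2 + X * o ^ 2 - C s * Q.comp (-X)) := by
    have : Q.comp (-X) ^ 2 + Q ^ 2 = 2 * expand ℤ 2 (e ^ 2 + X * o ^ 2) := by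
      rw [hneg]
      conv_lhs => rw [h]
      simp only [map_add, map_mul, map_pow, expand_X]
      ring
    rw [this]
    simp only [map_add, map_sub, map_mul, expand_C, map_ofNat]
    ring
  have hcancel : ∀ p : ℤ[X], C ((8 : ℕ) : ℤ) ∣ 2 * p ↔ C 4 ∣ p := by
    intro p
    rw [show (C ((8 : ℕ) : ℤ) : ℤ[X]) = 2 * C 4 from by
      rw [show (2 : ℤ[X]) = C 2 from rfl, ← C_mul]; norm_num]
    exact mul_dvd_mul_iff_left two_ne_zero
  unfold conditionS
  rw [hlead, ← sub_eq_zero, ← Polynomial.map_sub, ← expand_eq_comp_X_pow, comp_assoc,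
    show (-X : ℤ[X]).comp (-X) = X by simp, comp_X, map_intCast_zmod_eq_zero_iff, hexp, hcancel,
    C_dvd_expand_iff, ← C_dvd_comp_neg_X_iff]
  have hcomp : (e ^ 2 + X * o ^ 2 - C s * Q.comp (-X)).comp (-X) =
      C s * (C s * (e ^ 2 - X * o ^ 2) - Q) +
        ((e.comp (-X) ^ 2 - e ^ 2) - X * (o.comp (-X) ^ 2 - o ^ 2)) := by
    simp only [sub_comp, add_comp, mul_comp, pow_comp, X_comp, C_comp, comp_assoc, neg_comp,
      neg_neg, comp_X]
    linear_combination -(e ^ 2 - X * o ^ 2) * hss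
  rw [hcomp, dvd_add_left (dvd_sub (hsq e) ((hsq o).mul_left X))]
  refine ⟨fun hd => ?_, fun hd => hd.mul_left _⟩
  have := hd.mul_left (C s)
  rwa [← mul_assoc, hss, one_mul] at this

lemma odd_orderOf_mk_X {q : (ZMod 2)[X]} (hq : Irreducible q) (h0 : q.coeff 0 ≠ 0) :
    Odd (orderOf (Ideal.Quotient.mk (Ideal.span {q}) (X : (ZMod 2)[X]))) := by
  have : Fact (Irreducible q) := ⟨hq⟩
  change Odd (orderOf (AdjoinRoot.root q))
  have : Module.Finite (ZMod 2) (AdjoinRoot q) := (AdjoinRoot.powerBasis hq.ne_zero).finite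
  have : Finite (AdjoinRoot q) := Module.finite_of_finite (ZMod 2)
  have : CharP (AdjoinRoot q) 2 := charP_of_injective_algebraMap' (ZMod 2) 2
  have hroot : AdjoinRoot.root q ≠ 0 := by
    intro h
    have := AdjoinRoot.eval₂_root q
    rw [h, eval₂_at_zero] at this
    exact h0 ((map_eq_zero _).1 this)
  have hpos : 0 < orderOf (AdjoinRoot.root q) := by
    rw [← Units.val_mk0 hroot, orderOf_units]
    exact orderOf_pos _
  by_contra hodd
  obtain ⟨k, hk⟩ := even_iff_exists_two_mul.1 (Nat.not_odd_iff_even.1 hodd)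
  have h1 : (AdjoinRoot.root q ^ k - 1) ^ 2 = 0 := by
    rw [sub_pow_char, ← pow_mul, mul_comm k, ← hk, pow_orderOf_eq_one]; simp
  have h2 := orderOf_le_of_pow_eq_one (by omega)
    (sub_eq_zero.1 (pow_eq_zero_iff two_ne_zero |>.1 h1))
  omega

theorem stmt11 (Q : Polynomial ℤ) (r : ℕ) (hr : Q.natDegree = r)
    (hmonic : Q.Monic) (hconst : Odd (Q.coeff 0))
    (hirr : Irreducible (Q.map (Int.castRingHom (ZMod 2))))
    (lam : ℕ)
    (hlam : lam = orderOf (Ideal.Quotient.mk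
      (Ideal.span {Q.map (Int.castRingHom (ZMod 2))}) (X : Polynomial (ZMod 2)))) :
    (X ^ lam - 1 ∈ Ideal.span ({C 4, Q} : Set (Polynomial ℤ))) ↔
      conditionS (Q.comp (-X)) := by
  obtain ⟨e, o, h⟩ := Q.exists_eq_expand_add_X_mul_expand
  rw [conditionS_comp_neg_X_iff hmonic h]
  have hprime := hirr.prime
  set I := Ideal.span ({C 4, Q} : Set ℤ[X]) with hI
  have h4I : C 4 ∈ I := Ideal.subset_span (by simp)
  have hQI : Q ∈ I := Ideal.subset_span (by simp)
  have hneg : Q.comp (-X) = expand ℤ 2 e - X * expand ℤ 2 o := by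
    conv_lhs => rw [h]
    simp [expand_eq_comp_X_pow, comp_assoc, sub_eq_add_neg]
  set s : ℤ := (-1) ^ Q.natDegree with hs
  set G := C s * (e ^ 2 - X * o ^ 2) with hG
  have hGexp : expand ℤ 2 G = C s * Q.comp (-X) * Q := by
    rw [hneg]
    conv_rhs => rw [h]
    simp only [hG, map_mul, map_sub, map_pow, expand_X, expand_C]
    ring
  have hGI : expand ℤ 2 G ∈ I := hGexp ▸ I.mul_mem_left _ hQI
  have hdvd : Q.map (Int.castRingHom (ZMod 2)) ∣
      (X ^ lam - 1 : ℤ[X]).map (Int.castRingHom (ZMod 2)) := by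
    rw [← Ideal.mem_span_singleton, ← Ideal.Quotient.eq_zero_iff_mem]
    simp [hlam, pow_orderOf_eq_one]
  have hexpX : expand ℤ 2 (X ^ lam - 1) = (X ^ lam - 1) * (X ^ lam - 1 + 2) := by
    simp only [map_sub, map_pow, expand_X, map_one]
    ring
  constructor
  · intro hmem
    have hodd : Odd lam := by
      rw [hlam]
      refine odd_orderOf_mk_X hirr ?_
      obtain ⟨k, hk⟩ := hconst
      have h2 : (2 : ZMod 2) = 0 := rfl
      simp [hk, h2]
    have hQ2 : expand ℤ 2 Q ∈ I := by
      obtain ⟨d, c, hdc⟩ := mem_span_four_iff.1 hmem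
      obtain ⟨f, hf⟩ : C ((2 : ℕ) : ℤ) ∣ expand ℤ 2 Q - Q ^ 2 := by
        rw [← map_intCast_zmod_eq_zero_iff, Polynomial.map_sub, map_zmod_two_expand]
        simp
      rw [show (C ((2 : ℕ) : ℤ) : ℤ[X]) = 2 from rfl, sub_eq_iff_eq_add] at hf
      rw [hf]
      refine I.add_mem ?_ (by rw [sq]; exact I.mul_mem_left _ hQI)
      have h2 : 2 * (f * expand ℤ 2 c) ∈ I := by
        have h3 : expand ℤ 2 (X ^ lam - 1) ∈ I := hexpX ▸ I.mul_mem_right _ hmem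
        have h4 : 2 * (f * expand ℤ 2 c) =
            expand ℤ 2 (X ^ lam - 1) - C 4 * expand ℤ 2 d - Q * (Q * expand ℤ 2 c) := by
          rw [hdc, map_add, map_mul, map_mul, hf, show (C 4 : ℤ[X]) = 4 from rfl, map_ofNat]
          ring
        rw [h4]
        exact I.sub_mem (I.sub_mem h3 (I.mul_mem_right _ h4I)) (I.mul_mem_right _ hQI)
      rw [hI, two_mul_mem_span_four_iff hmonic, Polynomial.map_mul, map_zmod_two_expand] at h2
      rw [hI, two_mul_mem_span_four_iff hmonic]
      refine (hprime.dvd_or_dvd h2).resolve_right fun hc => ?_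
      have hc := hprime.dvd_of_dvd_pow hc
      have hsf : Squarefree (X ^ lam - 1 : (ZMod 2)[X]) := by
        refine (X_pow_sub_one_separable_iff.2 ?_).squarefree
        rw [Ne, ZMod.natCast_eq_zero_iff]
        exact hodd.not_two_dvd_nat
      refine hirr.not_isUnit (hsf _ ?_)
      have h0 : (4 : (ZMod 2)[X]) = 0 := by
        linear_combination 2 * (CharTwo.two_eq_zero : (2 : (ZMod 2)[X]) = 0)
      have := congrArg (map (Int.castRingHom (ZMod 2))) hdc
      simp only [Polynomial.map_sub, Polynomial.map_pow, map_X, Polynomial.map_one,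
        Polynomial.map_mul, Polynomial.map_add, Polynomial.map_ofNat, h0, zero_mul,
        zero_add] at this
      rw [this]
      exact mul_dvd_mul_left _ hc
    obtain ⟨D, hD⟩ : C ((2 : ℕ) : ℤ) ∣ G - Q := by
      rw [← C_dvd_expand_iff, ← map_intCast_zmod_eq_zero_iff, map_sub, Polynomial.map_sub,
        map_zmod_two_expand Q, hGexp]
      simp [Polynomial.map_comp, CharTwo.neg_eq, hs, sq]
    have hDdvd : Q.map (Int.castRingHom (ZMod 2)) ∣ D.map (Int.castRingHom (ZMod 2)) := by
      refine hprime.dvd_of_dvd_pow (n := 2) ?_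
      rw [← map_zmod_two_expand, ← two_mul_mem_span_four_iff hmonic, ← hI]
      have : 2 * expand ℤ 2 D = expand ℤ 2 G - expand ℤ 2 Q := by
        rw [← map_sub, hD, map_mul, expand_C]; rfl
      rw [this]
      exact I.sub_mem hGI hQ2
    have hcomp : (C s * Q.comp (-X)).Monic := by
      rw [Monic, leadingCoeff_mul, leadingCoeff_C, leadingCoeff_comp (by simp), hmonic.leadingCoeff,
        leadingCoeff_neg, leadingCoeff_X, one_mul, hs, ← mul_pow]
      simp
    have hs0 : s ≠ 0 := by simp [hs]
    have hGm : G.Monic := by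
      rw [← monic_expand_iff (p := 2) (by norm_num), hGexp]
      exact hcomp.mul hmonic
    have hGdeg : G.natDegree = Q.natDegree := by
      have := natDegree_expand 2 G
      rw [hGexp, hcomp.natDegree_mul hmonic, natDegree_C_mul hs0, natDegree_comp, natDegree_neg,
        natDegree_X] at this
      omega
    have hlt : (G - Q).degree < Q.degree := by
      have hdeg : G.degree = Q.degree := by
        rw [degree_eq_natDegree hGm.ne_zero, degree_eq_natDegree hmonic.ne_zero, hGdeg]
      rw [← hdeg]
      exact degree_sub_lt_left hdeg hGm.ne_zero (by rw [hGm.leadingCoeff, hmonic.leadingCoeff])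
    have hD0 : D.map (Int.castRingHom (ZMod 2)) = 0 := by
      refine eq_zero_of_dvd_of_degree_lt hDdvd ?_
      rw [hmonic.degree_map]
      refine (degree_map_le).trans_lt ?_
      rwa [hD, degree_C_mul (by norm_num)] at hlt
    obtain ⟨D', rfl⟩ := (map_intCast_zmod_eq_zero_iff 2 _).1 hD0
    exact ⟨D', by rw [hD, ← mul_assoc, ← C_mul]; norm_num⟩
  · rintro ⟨D, hD⟩
    have hQ2 : expand ℤ 2 Q ∈ I := by
      have : expand ℤ 2 Q = expand ℤ 2 G - C 4 * expand ℤ 2 D := by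
        rw [← expand_C (p := 2) (R := ℤ), ← map_mul, ← hD, ← map_sub, sub_sub_cancel]
      rw [this]
      exact I.sub_mem hGI (I.mul_mem_right _ h4I)
    obtain ⟨b, c, hbc⟩ := dvd_map_zmod_two_iff.1 hdvd
    have h2 : 2 * expand ℤ 2 b ∈ I := by
      have h3 : 2 * expand ℤ 2 b =
          C 4 * (b ^ 2 + b) + Q * (c * (4 * b + Q * c + 2)) - expand ℤ 2 Q * expand ℤ 2 c := by
        have := hexpX
        rw [hbc, map_add, map_mul, map_mul, map_ofNat] at this
        rw [show (C 4 : ℤ[X]) = 4 from rfl]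
        linear_combination this
      rw [h3]
      exact I.sub_mem (I.add_mem (I.mul_mem_right _ h4I) (I.mul_mem_right _ hQI))
        (I.mul_mem_right _ hQ2)
    rw [hI, two_mul_mem_span_four_iff hmonic, map_zmod_two_expand] at h2
    rw [hbc]
    exact I.add_mem ((two_mul_mem_span_four_iff hmonic).2 (hprime.dvd_of_dvd_pow h2))
      (I.mul_mem_right _ hQI)
end

section
/- Let Q(t) ∈ ℤ[t] be monic of degree r with Q mod 2 irreducible and odd constant coefficient, and let λ be the multiplicative order of t in (ℤ/2)[t]/(Q). If Q(−t) satisfies Condition S, then for all w ≥ 2, t^{2^{w−2} λ} ≡ 1 (mod 2^w, Q); in particular the multiplicative order of t in (ℤ/2^w)[t]/(Q) is at most 2^{w−2} λ. -/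
open Polynomial

/-- An integer polynomial vanishing mod `n` is a multiple of `n`. -/
theorem C_dvd_of_map_zmod_eq_zero (n : ℕ) {A : ℤ[X]}
    (h : A.map (Int.castRingHom (ZMod n)) = 0) : C (n : ℤ) ∣ A := by
  rw [C_dvd_iff_dvd_coeff]
  intro i
  rw [← ZMod.intCast_zmod_eq_zero_iff_dvd]
  simpa using congrArg (fun p => p.coeff i) h

/-- Divisibility mod `n` lifts to membership in the ideal `(n, Q)`. -/
theorem exists_eq_of_map_zmod_dvd (n : ℕ) {Q A : ℤ[X]}
    (h : Q.map (Int.castRingHom (ZMod n)) ∣ A.map (Int.castRingHom (ZMod n))) :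
    ∃ a b : ℤ[X], A = C (n : ℤ) * a + Q * b := by
  obtain ⟨b', hb'⟩ := h
  obtain ⟨b, rfl⟩ :=
    map_surjective (Int.castRingHom (ZMod n)) (ZMod.ringHom_surjective _) b'
  obtain ⟨a, ha⟩ := C_dvd_of_map_zmod_eq_zero n (A := A - Q * b) (by simp [hb'])
  exact ⟨a, b, by rw [← ha]; ring⟩

/-- The Frobenius congruence `A(X²) ≡ A(X)² (mod 2)`. -/
theorem exists_comp_sq_eq (A : ℤ[X]) : ∃ H : ℤ[X], A.comp (X ^ 2) = A ^ 2 + 2 * H := by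
  obtain ⟨H, hH⟩ := C_dvd_of_map_zmod_eq_zero 2 (A := A.comp (X ^ 2) - A ^ 2) (by
    rw [Polynomial.map_sub, Polynomial.map_pow, ← ZMod.expand_card, map_comp]
    simp [expand_eq_comp_X_pow])
  refine ⟨H, ?_⟩
  simp only [Nat.cast_ofNat, map_ofNat] at hH
  rw [← hH]; ring

/-- The congruence `A(-X) ≡ A(X) (mod 2)`. -/
theorem exists_comp_neg_eq (A : ℤ[X]) : ∃ D : ℤ[X], A.comp (-X) = A + 2 * D := by
  obtain ⟨D, hD⟩ := C_dvd_of_map_zmod_eq_zero 2 (A := A.comp (-X) - A) (by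
    have h : (-X : (ZMod 2)[X]) = X := CharTwo.neg_eq X
    rw [Polynomial.map_sub, map_comp, Polynomial.map_neg, map_X, h, comp_X, sub_self])
  refine ⟨D, ?_⟩
  simp only [Nat.cast_ofNat, map_ofNat] at hD
  rw [← hD]; ring

/-- Condition S for `Q(-X)` makes `X ↦ X²` well defined on `ℤ[X] / (4, Q)`. -/
theorem exists_comp_sq_eq_of_conditionS {Q : ℤ[X]} (hmonic : Q.Monic)
    (hS : conditionS (Q.comp (-X))) :
    ∃ U V : ℤ[X], Q.comp (X ^ 2) = 4 * U + Q * V := by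
  obtain ⟨D, hD⟩ := exists_comp_neg_eq Q
  obtain ⟨H, hH⟩ := exists_comp_sq_eq D
  obtain ⟨K, hK⟩ := exists_comp_neg_eq D
  have hlead : (Q.comp (-X)).leadingCoeff = (-1) ^ Q.natDegree := by
    rw [leadingCoeff_comp (by simp)]; simp [hmonic.leadingCoeff]
  unfold conditionS at hS
  rw [hlead, ← sub_eq_zero, ← Polynomial.map_sub] at hS
  obtain ⟨G, hG⟩ := C_dvd_of_map_zmod_eq_zero 8 hS
  have hcomp : (Q.comp (-X)).comp (-X) = Q := by simp [comp_assoc]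
  rw [hcomp, hD] at hG
  have hDX : Q.comp (X ^ 2) = (Q + 2 * D).comp (X ^ 2) + 2 * (D + 2 * K).comp (X ^ 2) := by
    have h := congrArg (fun p => p.comp (-X ^ 2)) hD
    have hneg := congrArg (fun p => p.comp (X ^ 2)) hD
    have hnegD := congrArg (fun p => p.comp (X ^ 2)) hK
    simp only [comp_assoc, neg_comp, X_comp, neg_neg] at h hneg hnegD
    rw [← hneg, ← hnegD, h]
    simp
  obtain ⟨s, hs, hs2⟩ : ∃ s : ℤ, (-1) ^ Q.natDegree = s ∧ (s = 1 ∨ s = -1) :=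
    ⟨_, rfl, neg_one_pow_eq_or ℤ _⟩
  rw [hs] at hG
  set Z := (Q + 2 * D).comp (X ^ 2)
  have hKX : (D + 2 * K).comp (X ^ 2) = D ^ 2 + 2 * H + 2 * K.comp (X ^ 2) := by
    simp [hH]
  rw [hKX] at hDX
  have two_ne : (2 : ℤ[X]) ≠ 0 := two_ne_zero
  rcases hs2 with rfl | rfl
  · have hZ : Z = Q ^ 2 + 2 * Q * D + 2 * D ^ 2 - 4 * G := by
      apply mul_left_cancel₀ two_ne
      simp at hG
      linear_combination -hG
    exact ⟨D ^ 2 + H + K.comp (X ^ 2) - G, Q + 2 * D, by rw [hDX, hZ]; ring⟩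
  · have hZ : Z = -(Q ^ 2 + 2 * Q * D + 2 * D ^ 2) + 4 * G := by
      apply mul_left_cancel₀ two_ne
      simp at hG
      linear_combination hG
    exact ⟨H + K.comp (X ^ 2) + G, -Q - 2 * D, by rw [hDX, hZ]; ring⟩

/-- If `X ^ m ≡ 1 (mod 2, Q)` then, under Condition S for `Q(-X)`, also
`X ^ m ≡ 1 (mod 4, Q)`. -/
theorem exists_X_pow_eq_mod_four {Q : ℤ[X]} (hmonic : Q.Monic)
    (hirr : Irreducible (Q.map (Int.castRingHom (ZMod 2))))
    (hS : conditionS (Q.comp (-X))) {m : ℕ} {A B : ℤ[X]}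
    (h : X ^ m - 1 = 2 * A + Q * B) :
    ∃ a b : ℤ[X], X ^ m - 1 = 4 * a + Q * b := by
  obtain ⟨U, V, hUV⟩ := exists_comp_sq_eq_of_conditionS hmonic hS
  obtain ⟨H, hH⟩ := exists_comp_sq_eq A
  have hX : (X : ℤ[X]) ^ m = 1 + 2 * A + Q * B := by linear_combination h
  have hsq : ((X : ℤ[X]) ^ m) ^ 2 - 1 =
      2 * A.comp (X ^ 2) + Q.comp (X ^ 2) * B.comp (X ^ 2) := by
    have := congrArg (fun p => p.comp (X ^ 2)) h
    simp only [sub_comp, pow_comp, X_comp, one_comp, add_comp, mul_comp, ofNat_comp] at this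
    rw [← pow_mul, mul_comm m 2, pow_mul, this]
    simp
  rw [hX, hUV, hH] at hsq
  obtain ⟨W, hW⟩ : ∃ W, W = 2 * B + 4 * A * B + Q * B ^ 2 - V * B.comp (X ^ 2) := ⟨_, rfl⟩
  obtain ⟨Y, hY⟩ : ∃ Y, Y = A + A ^ 2 - H - U * B.comp (X ^ 2) := ⟨_, rfl⟩
  have hA : 2 * A ^ 2 = 4 * Y + Q * W := by
    rw [hW, hY]; linear_combination -hsq
  have two_eq : (2 : (ZMod 2)[X]) = 0 := CharTwo.two_eq_zero
  have hWmap : W.map (Int.castRingHom (ZMod 2)) = 0 := by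
    have := congrArg (Polynomial.map (Int.castRingHom (ZMod 2))) hA
    have four_eq : (4 : (ZMod 2)[X]) = 0 := by linear_combination 2 * two_eq
    simpa [two_eq, four_eq, hirr.ne_zero] using this
  obtain ⟨W', rfl⟩ := C_dvd_of_map_zmod_eq_zero 2 hWmap
  have hA' : A ^ 2 = 2 * Y + Q * W' := by
    apply mul_left_cancel₀ (two_ne_zero : (2 : ℤ[X]) ≠ 0)
    simp only [Nat.cast_ofNat, map_ofNat] at hA
    linear_combination hA
  have hdvd : Q.map (Int.castRingHom (ZMod 2)) ∣ A.map (Int.castRingHom (ZMod 2)) := by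
    apply hirr.prime.dvd_of_dvd_pow (n := 2)
    rw [← Polynomial.map_pow, hA']
    simp [two_eq]
  obtain ⟨a, b, hab⟩ := exists_eq_of_map_zmod_dvd 2 hdvd
  simp only [Nat.cast_ofNat, map_ofNat] at hab
  exact ⟨a, 2 * b + B, by rw [h, hab]; ring⟩

/-- Repeated squaring raises a congruence mod `4` to one mod `2 ^ (k + 2)`. -/
theorem exists_X_pow_two_pow_mul_eq {Q : ℤ[X]} {m : ℕ}
    (h : ∃ a b : ℤ[X], X ^ m - 1 = 4 * a + Q * b) (k : ℕ) :
    ∃ a b : ℤ[X], X ^ (2 ^ k * m) - 1 = 2 ^ (k + 2) * a + Q * b := by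
  induction k with
  | zero => simpa [show (2 : ℤ[X]) ^ 2 = 4 by norm_num] using h
  | succ k ih =>
    obtain ⟨a, b, hab⟩ := ih
    have hX : (X : ℤ[X]) ^ (2 ^ k * m) = 1 + 2 ^ (k + 2) * a + Q * b := by
      linear_combination hab
    refine ⟨a + 2 ^ (k + 1) * a ^ 2, 2 * b + 2 * 2 ^ (k + 2) * a * b + Q * b ^ 2, ?_⟩
    rw [show 2 ^ (k + 1) * m = 2 ^ k * m * 2 by ring, pow_mul, hX]
    ring

/-- The class of `X` modulo a monic polynomial over a finite ring has positive order when the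
constant coefficient is a unit. -/
theorem orderOf_mk_X_pos {R : Type*} [CommRing R] [Finite R] {f : R[X]} (hf : f.Monic)
    (h0 : IsUnit (f.coeff 0)) : 0 < orderOf (Ideal.Quotient.mk (Ideal.span {f}) (X : R[X])) := by
  have : Module.Finite R (R[X] ⧸ Ideal.span {f}) := hf.finite_quotient
  have : Finite (R[X] ⧸ Ideal.span {f}) := Module.finite_of_finite R
  rw [orderOf_pos_iff, isOfFinOrder_iff_isUnit]
  have hmk : Ideal.Quotient.mk (Ideal.span {f}) (X * -f.divX) =
      Ideal.Quotient.mk (Ideal.span {f}) (C (f.coeff 0)) := by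
    rw [Ideal.Quotient.mk_eq_mk_iff_sub_mem, Ideal.mem_span_singleton]
    exact ⟨-1, by linear_combination -X_mul_divX_add f⟩
  rw [map_mul] at hmk
  exact isUnit_of_mul_isUnit_left (hmk ▸ (h0.map C).map _)

theorem stmt12 (Q : Polynomial ℤ) (r : ℕ) (hr : Q.natDegree = r)
    (hmonic : Q.Monic) (hconst : Odd (Q.coeff 0))
    (hirr : Irreducible (Q.map (Int.castRingHom (ZMod 2))))
    (lam : ℕ)
    (hlam : lam = orderOf (Ideal.Quotient.mk
      (Ideal.span {Q.map (Int.castRingHom (ZMod 2))}) (X : Polynomial (ZMod 2))))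
    (hS : conditionS (Q.comp (-X))) :
    ∀ w : ℕ, 2 ≤ w →
      (X ^ (2 ^ (w - 2) * lam) - 1 ∈
          Ideal.span ({C ((2 : ℤ) ^ w), Q} : Set (Polynomial ℤ))) ∧
      orderOf (Ideal.Quotient.mk
          (Ideal.span {Q.map (Int.castRingHom (ZMod (2 ^ w)))})
          (X : Polynomial (ZMod (2 ^ w)))) ≤ 2 ^ (w - 2) * lam := by
  have hpos : 0 < lam := by
    rw [hlam]
    refine orderOf_mk_X_pos (hmonic.map _) ?_
    have h1 : ((Q.coeff 0 : ℤ) : ZMod 2) = 1 := (ZMod.intCast_eq_one_iff_odd).2 hconst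
    simp [h1]
  have hmod2 : Q.map (Int.castRingHom (ZMod 2)) ∣
      (X ^ lam - 1 : ℤ[X]).map (Int.castRingHom (ZMod 2)) := by
    rw [← Ideal.mem_span_singleton, ← Ideal.Quotient.eq_zero_iff_mem]
    simp [hlam, pow_orderOf_eq_one]
  obtain ⟨A, B, hAB⟩ := exists_eq_of_map_zmod_dvd 2 hmod2
  simp only [Nat.cast_ofNat, map_ofNat] at hAB
  intro w hw
  obtain ⟨a, b, hab⟩ :=
    exists_X_pow_two_pow_mul_eq (exists_X_pow_eq_mod_four hmonic hirr hS hAB) (w - 2)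
  rw [Nat.sub_add_cancel hw] at hab
  refine ⟨?_, ?_⟩
  · rw [Ideal.mem_span_pair]
    exact ⟨a, b, by rw [hab]; simp; ring⟩
  · refine orderOf_le_of_pow_eq_one (by positivity) ?_
    rw [← map_pow, ← map_one (Ideal.Quotient.mk _), Ideal.Quotient.mk_eq_mk_iff_sub_mem,
      Ideal.mem_span_singleton]
    refine ⟨b.map (Int.castRingHom (ZMod (2 ^ w))), ?_⟩
    have hzero : (2 : (ZMod (2 ^ w))[X]) ^ w = 0 := by
      exact_mod_cast CharP.cast_eq_zero (ZMod (2 ^ w))[X] (2 ^ w)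
    simpa [hzero] using congrArg (Polynomial.map (Int.castRingHom (ZMod (2 ^ w)))) hab
end
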